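/- Let g(k) count words of length k over the alphabet {0,1,n} (where n ≥ 3 is fixed) in which the allowed adjacent pairs (i,j) are exactly (0,0), (0,1), (1,n), (n,0), (n,1). Then g(k) = F_{k+3}, the (k+3)-rd Fibonacci number (with F_1 = F_2 = 1). -/

import Mathlib

/-- The relation ν on the alphabet {0, 1, n}. -/
def nu (n i j : ℕ) : Prop :=
  (i = 0 ∧ j = 0) ∨ (i = 0 ∧ j = 1) ∨ (i = 1 ∧ j = n) ∨ (i = n ∧ j = 0) ∨ (i = n ∧ j = 1)

/-- Admissible words of length `k+1` starting with `a`. -/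
def Sw (n k a : ℕ) : Set (Fin (k+1) → ℕ) :=
  {w | w 0 = a ∧ (∀ i, w i = 0 ∨ w i = 1 ∨ w i = n) ∧
      ∀ i : Fin (k+1), ∀ h : (i : ℕ) + 1 < k+1, nu n (w i) (w ⟨(i : ℕ) + 1, h⟩)}

lemma cons_mem_Sw (n k a c : ℕ) (v : Fin (k+1) → ℕ) :
    (Fin.cons c v : Fin (k+2) → ℕ) ∈ Sw n (k+1) a ↔
      c = a ∧ (a = 0 ∨ a = 1 ∨ a = n) ∧ nu n a (v 0) ∧ v ∈ Sw n k (v 0) := by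
  constructor
  · rintro ⟨h0, h1, h2⟩
    have h0' : c = a := h0
    subst h0'
    refine ⟨rfl, h1 0, h2 0 (by simp), rfl, fun i => h1 i.succ, fun i h => ?_⟩
    exact h2 i.succ (by simpa using h)
  · rintro ⟨rfl, h1, h2, -, h3, h4⟩
    refine ⟨rfl, fun i => ?_, fun i => ?_⟩
    · refine Fin.cases h1 (fun j => h3 j) i
    · refine Fin.cases (fun _ => h2) (fun j h => h4 j (by simpa using h)) i

lemma Sw_succ (n k a : ℕ) (T : Set (Fin (k+1) → ℕ)) (ha : a = 0 ∨ a = 1 ∨ a = n)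
    (hT : ∀ v, v ∈ T ↔ nu n a (v 0) ∧ v ∈ Sw n k (v 0)) :
    Sw n (k+1) a = (fun v => (Fin.cons a v : Fin (k+2) → ℕ)) '' T := by
  ext w
  obtain ⟨c, v, rfl⟩ : ∃ c v, w = (Fin.cons c v : Fin (k+2) → ℕ) :=
    ⟨w 0, Fin.tail w, (Fin.cons_self_tail w).symm⟩
  rw [cons_mem_Sw, Set.mem_image]
  constructor
  · rintro ⟨rfl, -, h⟩
    exact ⟨v, (hT v).2 h, rfl⟩
  · rintro ⟨u, hu, he⟩
    obtain ⟨rfl, rfl⟩ := Fin.cons_inj.1 he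
    exact ⟨rfl, ha, (hT u).1 hu⟩

lemma Sw_zero (n a : ℕ) (ha : a = 0 ∨ a = 1 ∨ a = n) : Sw n 0 a = {fun _ => a} := by
  ext w
  simp only [Sw, Set.mem_ofPred_eq, Set.mem_singleton_iff]
  constructor
  · rintro ⟨h, -⟩
    funext i
    have hi : i = 0 := Fin.ext (by have := i.2; simp)
    rw [hi, h]
  · rintro rfl
    exact ⟨rfl, fun _ => ha, fun i h => by omega⟩

lemma Sw_disj (n k a b : ℕ) (h : a ≠ b) : Disjoint (Sw n k a) (Sw n k b) := by
  rw [Set.disjoint_left]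
  rintro w ⟨h1, -⟩ ⟨h2, -⟩
  exact h (h1.symm.trans h2)

lemma mem_Sw_head {n k a : ℕ} {v : Fin (k+1) → ℕ} :
    v ∈ Sw n k a ↔ v 0 = a ∧ v ∈ Sw n k (v 0) := by
  constructor
  · rintro h
    have := h.1
    exact ⟨this, this.symm ▸ h⟩
  · rintro ⟨h, h'⟩
    exact h ▸ h'

lemma Sw_card (n : ℕ) (hn : 3 ≤ n) (k : ℕ) :
    ((Sw n k 0).Finite ∧ (Sw n k 1).Finite ∧ (Sw n k n).Finite) ∧
    (Sw n k 0).ncard = Nat.fib (k+2) ∧ (Sw n k 1).ncard = Nat.fib (k+1) ∧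
    (Sw n k n).ncard = Nat.fib (k+2) := by
  induction k with
  | zero => simp [Sw_zero]
  | succ k ih =>
    obtain ⟨⟨f0, f1, fn⟩, c0, c1, cn⟩ := ih
    have inj : ∀ a : ℕ, Function.Injective
        (fun v : Fin (k+1) → ℕ => (Fin.cons a v : Fin (k+2) → ℕ)) :=
      fun a => Fin.cons_right_injective (α := fun _ => ℕ) a
    have e0 := Sw_succ n k 0 (Sw n k 0 ∪ Sw n k 1) (by simp) (fun v => by
      rw [Set.mem_union, mem_Sw_head (a := 0), mem_Sw_head (a := 1), nu, ← or_and_right]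
      refine and_congr_left fun _ => ?_
      omega)
    have e1 := Sw_succ n k 1 (Sw n k n) (by simp) (fun v => by
      rw [mem_Sw_head (a := n), nu]
      refine and_congr_left fun _ => ?_
      omega)
    have en := Sw_succ n k n (Sw n k 0 ∪ Sw n k 1) (by simp) (fun v => by
      rw [Set.mem_union, mem_Sw_head (a := 0), mem_Sw_head (a := 1), nu, ← or_and_right]
      refine and_congr_left fun _ => ?_
      omega)
    have cu := Set.ncard_union_eq (Sw_disj n k 0 1 (by simp)) f0 f1
    have hf : Nat.fib (k+1+2) = Nat.fib (k+1) + Nat.fib (k+2) := Nat.fib_add_two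
    rw [e0, e1, en]
    refine ⟨⟨(f0.union f1).image _, fn.image _, (f0.union f1).image _⟩, ?_, ?_, ?_⟩
    · rw [Set.ncard_image_of_injective _ (inj _)]; omega
    · rw [Set.ncard_image_of_injective _ (inj _)]; exact cn
    · rw [Set.ncard_image_of_injective _ (inj _)]; omega

/-- The number of words of length `k` over the alphabet {0, 1, n} (n ≥ 3) whose
adjacent pairs all satisfy ν equals the Fibonacci number `F_{k+3}`. -/
theorem stmt1 (n : ℕ) (hn : 3 ≤ n) (k : ℕ) (hk : 1 ≤ k) :
    Nat.card {w : Fin k → ℕ //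
      (∀ i, w i = 0 ∨ w i = 1 ∨ w i = n) ∧
      ∀ i : Fin k, ∀ h : (i : ℕ) + 1 < k, nu n (w i) (w ⟨(i : ℕ) + 1, h⟩)} =
    Nat.fib (k + 3) := by
  obtain ⟨k, rfl⟩ : ∃ m, k = m + 1 := ⟨k - 1, by omega⟩
  obtain ⟨⟨f0, f1, fn⟩, c0, c1, cn⟩ := Sw_card n hn k
  have key : {w : Fin (k+1) → ℕ | (∀ i, w i = 0 ∨ w i = 1 ∨ w i = n) ∧
      ∀ i : Fin (k+1), ∀ h : (i : ℕ) + 1 < k+1, nu n (w i) (w ⟨(i : ℕ) + 1, h⟩)} =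
      (Sw n k 0 ∪ Sw n k 1) ∪ Sw n k n := by
    ext w
    simp only [Sw, Set.mem_union, Set.mem_ofPred_eq, ← or_and_right]
    refine ⟨fun h => ⟨?_, h⟩, fun h => h.2⟩
    have := h.1 0
    omega
  change Set.ncard {w : Fin (k+1) → ℕ | (∀ i, w i = 0 ∨ w i = 1 ∨ w i = n) ∧
      ∀ i : Fin (k+1), ∀ h : (i : ℕ) + 1 < k+1, nu n (w i) (w ⟨(i : ℕ) + 1, h⟩)} = _
  rw [key, Set.ncard_union_eq _ (f0.union f1) fn,
    Set.ncard_union_eq (Sw_disj n k 0 1 (by simp)) f0 f1]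
  · have h1 : Nat.fib (k+1+3) = Nat.fib (k+2) + Nat.fib (k+3) := Nat.fib_add_two
    have h2 : Nat.fib (k+3) = Nat.fib (k+1) + Nat.fib (k+2) := Nat.fib_add_two
    omega
  · exact Disjoint.union_left (Sw_disj n k 0 n (by omega)) (Sw_disj n k 1 n (by omega))
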